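/- arXiv:2507.10821 — 6 statements merged into one kernel-verified Lean document; each statement's English description precedes it below -/
import Mathlib

section
/- Let N ≥ 1 and set n = N+1. Let 𝓛 : ℂ^(2n) → ℂ^(2n) be a bijective linear map satisfying ⟨P₋ 𝓛x, 𝓛y⟩ = ⟨P₊ x, y⟩ for all x, y ∈ ℂ^(2n). Then the graph X = {(x, 𝓛x) : x ∈ ℂ^(2n)} is ρ-self-orthogonal, i.e. X = X^{⊥ρ} where X^{⊥ρ} = {(x,y) : ρ((x,y),(x̃,ỹ)) = 0 for all (x̃,ỹ) ∈ X}. -/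
/-!
On the graph, `ρ((x, 𝓛x), (z, 𝓛z)) = 0` is exactly the isometry hypothesis. Conversely, if
`(x, y)` is `ρ`-orthogonal to the graph, that hypothesis turns orthogonality into
`⟨P₋ 𝓛x, 𝓛z⟩ = ⟨P₋ y, 𝓛z⟩` for all `z`. Since `𝓛` is surjective and the Hermitian product is
nondegenerate (`eq_of_herm_eq`), `P₋ 𝓛x = P₋ y`, and `P₋` is injective (`Pminus_mulVec_injective`).
-/

open scoped BigOperators

/-- The standard Hermitian inner product on `ι → ℂ`, linear in the first argument and
conjugate-linear in the second. -/
noncomputable def herm {ι : Type*} [Fintype ι] (x y : ι → ℂ) : ℂ :=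
  ∑ i, x i * (starRingEnd ℂ) (y i)

/-- The block-diagonal matrix `P₊` consisting of `n = N+1` copies of
`P₀ = [[0,1],[-1,0]]` on the diagonal; indices modelled as `Fin (N+1) × Fin 2`. -/
noncomputable def Pplus (N : ℕ) : Matrix (Fin (N + 1) × Fin 2) (Fin (N + 1) × Fin 2) ℂ :=
  fun p q =>
    if p.1 = q.1 then
      (if p.2 = 0 ∧ q.2 = 1 then 1 else if p.2 = 1 ∧ q.2 = 0 then -1 else 0)
    else 0

/-- `P₋ = (1/(N+1)) • P₊`. -/
noncomputable def Pminus (N : ℕ) : Matrix (Fin (N + 1) × Fin 2) (Fin (N + 1) × Fin 2) ℂ :=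
  (((N : ℂ) + 1)⁻¹) • Pplus N

/-- The sesquilinear form `ρ((x,y),(x̃,ỹ)) = (x|x̃)₊ − (y|ỹ)₋`. -/
noncomputable def rhoForm (N : ℕ)
    (p q : (Fin (N + 1) × Fin 2 → ℂ) × (Fin (N + 1) × Fin 2 → ℂ)) : ℂ :=
  herm ((Pplus N).mulVec p.1) q.1 - herm ((Pminus N).mulVec p.2) q.2

theorem eq_of_herm_eq {ι : Type*} [Fintype ι] {u v : ι → ℂ}
    (h : ∀ z, herm u z = herm v z) : u = v := by
  classical
  funext i
  have := h (Pi.single i 1)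
  simpa [herm, Pi.single_apply, apply_ite (starRingEnd ℂ)] using this

theorem Pplus_mulVec_zero (N : ℕ) (y : Fin (N + 1) × Fin 2 → ℂ) (i : Fin (N + 1)) :
    (Pplus N).mulVec y (i, 0) = y (i, 1) := by
  simp [Matrix.mulVec, dotProduct, Pplus, Fintype.sum_prod_type]

theorem Pplus_mulVec_one (N : ℕ) (y : Fin (N + 1) × Fin 2 → ℂ) (i : Fin (N + 1)) :
    (Pplus N).mulVec y (i, 1) = -y (i, 0) := by
  simp [Matrix.mulVec, dotProduct, Pplus, Fintype.sum_prod_type]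

theorem Pminus_mulVec_injective (N : ℕ) : Function.Injective (Pminus N).mulVec := by
  intro u v h
  have hN : ((N : ℂ) + 1)⁻¹ ≠ 0 := inv_ne_zero (Nat.cast_add_one_ne_zero N)
  have h' : (Pplus N).mulVec u = (Pplus N).mulVec v := by
    simp only [Pminus, Matrix.smul_mulVec] at h
    exact smul_right_injective _ hN h
  funext ⟨i, j⟩
  -- `P₊` swaps the two coordinates of each block up to sign, so both can be read off.
  have h0 := congrFun h' (i, 0)
  have h1 := congrFun h' (i, 1)
  rw [Pplus_mulVec_zero, Pplus_mulVec_zero] at h0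
  rw [Pplus_mulVec_one, Pplus_mulVec_one, neg_inj] at h1
  fin_cases j
  · exact h1
  · exact h0

/-- If `𝓛 : ℂ^(2n) → ℂ^(2n)` (with `n = N+1`) is a bijective linear map
satisfying `⟨P₋ 𝓛x, 𝓛y⟩ = ⟨P₊ x, y⟩` for all `x, y`, then its graph
`X = {(x, 𝓛x)}` is `ρ`-self-orthogonal: `X = X^{⊥ρ}`. -/
theorem graph_of_unitary_is_selfOrthogonal (N : ℕ) (hN : 1 ≤ N)
    (𝓛 : (Fin (N + 1) × Fin 2 → ℂ) →ₗ[ℂ] (Fin (N + 1) × Fin 2 → ℂ))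
    (hbij : Function.Bijective 𝓛)
    (huni : ∀ x y : Fin (N + 1) × Fin 2 → ℂ,
      herm ((Pminus N).mulVec (𝓛 x)) (𝓛 y) = herm ((Pplus N).mulVec x) y) :
    {p : (Fin (N + 1) × Fin 2 → ℂ) × (Fin (N + 1) × Fin 2 → ℂ) | p.2 = 𝓛 p.1}
      = {p : (Fin (N + 1) × Fin 2 → ℂ) × (Fin (N + 1) × Fin 2 → ℂ) |
          ∀ q ∈ {p : (Fin (N + 1) × Fin 2 → ℂ) × (Fin (N + 1) × Fin 2 → ℂ) | p.2 = 𝓛 p.1},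
            rhoForm N p q = 0} := by
  ext ⟨x, y⟩
  simp only [Set.mem_setOf_eq]
  constructor
  · rintro rfl ⟨z, w⟩ hw
    simp only at hw
    subst hw
    simp [rhoForm, huni]
  · intro h
    refine Pminus_mulVec_injective N (eq_of_herm_eq fun w => ?_)
    obtain ⟨z, rfl⟩ := hbij.surjective w
    have hz := h (z, 𝓛 z) rfl
    simp only [rhoForm] at hz
    rw [huni]
    exact (sub_eq_zero.mp hz).symm
end

section
/- Let N ≥ 1 and let m_{ij} ∈ ℝ for i,j ∈ {1,…,N+1} satisfy m_{ij} = m_{ji}. Define the real 2(N+1)×2(N+1) matrix 𝓛_N as the (N+1)×(N+1) block matrix with 2×2 blocks A_{ij}, where A_{ii} has rows (1, 0) and (m_{ii}, N+1), and for i ≠ j, A_{ij} has rows (0, 0) and (m_{ij}, 0). Then 𝓛_N is invertible and satisfies 𝓛_N^T P₋ 𝓛_N = P₊ (equivalently, ⟨P₋ 𝓛_N x, 𝓛_N y⟩ = ⟨P₊ x, y⟩ for all x, y ∈ ℂ^(2(N+1))). -/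
/-!
`𝓛_N` has top rows `(i, 0)` equal to standard basis rows and bottom rows `(i, 1)` carrying `m`
in the `0`-columns and `(N + 1) • 1` in the `1`-columns; in the splitting of `ℂ^(2(N+1))` by the
second index it is `[[1, 0], [M, n]]` and `P₊` is the symplectic form `[[0, 1], [-1, 0]]`.
Hence `𝓛_Nᵀ P₊ 𝓛_N = [[M - Mᵀ, n], [-n, 0]]`, which is `n P₊` because `M` is symmetric
(`LNmat_transpose_mul`). Since `P₊² = -1`, this identity exhibits the left inverse
`-P₊ 𝓛_Nᵀ P₋` of `𝓛_N`, and since `𝓛_N` is real it is equivalent to the identity for the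
Hermitian form.
-/

open scoped BigOperators
open Matrix

/-- The block matrix `𝓛_N` with diagonal `2×2` blocks `A_{ii} = [[1,0],[m_{ii}, N+1]]`
and off-diagonal blocks `A_{ij} = [[0,0],[m_{ij},0]]`. -/
noncomputable def LNmat (N : ℕ) (m : Fin (N + 1) → Fin (N + 1) → ℝ) :
    Matrix (Fin (N + 1) × Fin 2) (Fin (N + 1) × Fin 2) ℂ :=
  fun p q =>
    if p.1 = q.1 then
      (if p.2 = 0 then (if q.2 = 0 then 1 else 0)
       else (if q.2 = 0 then (m p.1 q.1 : ℂ) else ((N : ℂ) + 1)))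
    else
      (if p.2 = 1 ∧ q.2 = 0 then (m p.1 q.1 : ℂ) else 0)

lemma LNmat_zero_row (N : ℕ) (m : Fin (N + 1) → Fin (N + 1) → ℝ) (k : Fin (N + 1))
    (q : Fin (N + 1) × Fin 2) :
    LNmat N m (k, 0) q = if k = q.1 then (if q.2 = 0 then 1 else 0) else 0 := by
  simp [LNmat]

lemma LNmat_one_row (N : ℕ) (m : Fin (N + 1) → Fin (N + 1) → ℝ) (k : Fin (N + 1))
    (q : Fin (N + 1) × Fin 2) :
    LNmat N m (k, 1) q =
      if q.2 = 0 then (m k q.1 : ℂ) else if k = q.1 then (N : ℂ) + 1 else 0 := by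
  simp only [LNmat]
  split_ifs <;> simp_all

/-- Left multiplication by `P₊` sends the rows `(r₀, r₁)` of each block to `(r₁, -r₀)`. -/
lemma Pplus_mul_apply (N : ℕ) (A : Matrix (Fin (N + 1) × Fin 2) (Fin (N + 1) × Fin 2) ℂ)
    (k : Fin (N + 1)) (a : Fin 2) (q : Fin (N + 1) × Fin 2) :
    (Pplus N * A) (k, a) q = if a = 0 then A (k, 1) q else -A (k, 0) q := by
  rw [Matrix.mul_apply, Fintype.sum_prod_type]
  fin_cases a <;> simp [Pplus]

lemma Pplus_mul_self (N : ℕ) : Pplus N * Pplus N = -1 := by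
  ext ⟨i, a⟩ ⟨j, b⟩
  rw [Pplus_mul_apply]
  by_cases h : i = j <;> fin_cases a <;> fin_cases b <;>
    simp [Pplus, h]

lemma LNmat_transpose_mul (N : ℕ) (m : Fin (N + 1) → Fin (N + 1) → ℝ)
    (hm : ∀ i j, m i j = m j i) :
    (LNmat N m)ᵀ * (Pplus N * LNmat N m) = ((N : ℂ) + 1) • Pplus N := by
  ext ⟨i, a⟩ ⟨j, b⟩
  rw [Matrix.mul_apply, Fintype.sum_prod_type]
  simp only [Fin.sum_univ_two, Pplus_mul_apply, Matrix.transpose_apply, LNmat_zero_row,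
    LNmat_one_row, Finset.sum_add_distrib]
  by_cases h : i = j
  · subst h
    fin_cases a <;> fin_cases b <;> simp [Pplus]
  · have h' : ¬ j = i := fun e => h e.symm
    fin_cases a <;> fin_cases b <;> simp [Pplus, h, h', hm i j]

lemma LNmat_transpose_mul_Pminus (N : ℕ) (m : Fin (N + 1) → Fin (N + 1) → ℝ)
    (hm : ∀ i j, m i j = m j i) :
    (LNmat N m)ᵀ * Pminus N * LNmat N m = Pplus N := by
  have hn : (N : ℂ) + 1 ≠ 0 := Nat.cast_add_one_ne_zero N
  rw [Pminus, Matrix.mul_smul, Matrix.smul_mul, Matrix.mul_assoc, LNmat_transpose_mul N m hm,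
    smul_smul, inv_mul_cancel₀ hn, one_smul]

lemma herm_eq_dotProduct {ι : Type*} [Fintype ι] (x y : ι → ℂ) : herm x y = x ⬝ᵥ star y := rfl

/-- The entries of `𝓛_N` are real. -/
lemma star_LNmat_mulVec (N : ℕ) (m : Fin (N + 1) → Fin (N + 1) → ℝ)
    (y : Fin (N + 1) × Fin 2 → ℂ) :
    star ((LNmat N m).mulVec y) = (LNmat N m).mulVec (star y) := by
  have hreal : ∀ p q, (starRingEnd ℂ) (LNmat N m p q) = LNmat N m p q := by
    intro p q
    simp only [LNmat]
    split_ifs <;> simp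
  ext p
  simp [Matrix.mulVec, dotProduct, hreal]

/-- For symmetric real parameters `m_{ij}`, the matrix `𝓛_N` is
invertible and satisfies `𝓛_Nᵀ P₋ 𝓛_N = P₊`, equivalently
`⟨P₋ 𝓛_N x, 𝓛_N y⟩ = ⟨P₊ x, y⟩` for all `x, y ∈ ℂ^(2(N+1))`. -/
theorem LN_is_unitary (N : ℕ) (hN : 1 ≤ N) (m : Fin (N + 1) → Fin (N + 1) → ℝ)
    (hm : ∀ i j, m i j = m j i) :
    IsUnit (LNmat N m) ∧
    (LNmat N m)ᵀ * Pminus N * LNmat N m = Pplus N ∧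
    ∀ x y : Fin (N + 1) × Fin 2 → ℂ,
      herm ((Pminus N).mulVec ((LNmat N m).mulVec x)) ((LNmat N m).mulVec y)
        = herm ((Pplus N).mulVec x) y := by
  have key := LNmat_transpose_mul_Pminus N m hm
  refine ⟨?_, key, fun x y => ?_⟩
  · refine IsUnit.of_mul_eq_one_right (-(Pplus N * ((LNmat N m)ᵀ * Pminus N))) ?_
    rw [Matrix.neg_mul, Matrix.mul_assoc, key, Pplus_mul_self, neg_neg]
  -- Moving `𝓛_N` across the bilinear pairing turns it into its transpose.
  · rw [herm_eq_dotProduct, herm_eq_dotProduct, star_LNmat_mulVec, Matrix.dotProduct_mulVec,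
      ← Matrix.mulVec_transpose, Matrix.mulVec_mulVec, Matrix.mulVec_mulVec, key]
end

section
/- Let N ≥ 1 and let m_{ij} ∈ ℝ for i,j ∈ {1,…,N+1} satisfy m_{ij} = m_{ji}. Let 𝓛_N be the (N+1)×(N+1) block matrix with 2×2 blocks A_{ij}, where A_{ii} has rows (1, 0) and (m_{ii}, N+1), and for i ≠ j, A_{ij} has rows (0, 0) and (m_{ij}, 0). Let a, a', b, b', c₁, c₁', …, c_N, c_N' ∈ ℂ and suppose 𝓛_N·(a, a', c₁, c₁', …, c_N, c_N')^T = (b, b', b, b', …, b, b')^T (with N+1 copies of (b, b')). Then a = b = c₁ = ⋯ = c_N and b' − a' = Σ_{j=1}^{N} cⱼ' + (1/(N+1))·(Σ_{i,j=1}^{N+1} m_{ij})·a. In particular, interpreting a = φ(−L), a' = φ'(−L), b = φ(L), b' = φ'(L), cⱼ = ψⱼ(L), cⱼ' = ψⱼ'(L), the boundary equations of 𝓛_N are exactly the δ-type conditions φ(−L) = φ(L) = ψ₁(L) = ⋯ = ψ_N(L) and φ'(L) − φ'(−L) = Σⱼ ψⱼ'(L) + Z·φ(−L) with Z = (1/(N+1))·Σ_{i,j}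 m_{ij}. -/
/-! The rows `(i, 0)` of `𝓛_N v = w` read `v (i, 0) = b`, which is continuity at the vertex.
The rows `(i, 1)` read `∑ j, m i j * v (j, 0) + (N + 1) * v (i, 1) = b'`; with `v (j, 0) = b` substituted,
summing them over `i` and dividing by `N + 1` gives the jump condition on the derivatives. -/

open scoped BigOperators
open Matrix

/-- The vector `(a, a', c₁, c₁', …, c_N, c_N')`. -/
noncomputable def bvec {N : ℕ} (a a' : ℂ) (c c' : Fin N → ℂ) :
    Fin (N + 1) × Fin 2 → ℂ := fun p =>
  Fin.cases (motive := fun _ => Fin 2 → ℂ)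
    (fun α => if α = 0 then a else a')
    (fun k α => if α = 0 then c k else c' k) p.1 p.2

theorem LNmat_mulVec_zero (N : ℕ) (m : Fin (N + 1) → Fin (N + 1) → ℝ)
    (v : Fin (N + 1) × Fin 2 → ℂ) (i : Fin (N + 1)) :
    (LNmat N m).mulVec v (i, 0) = v (i, 0) := by
  simp [Matrix.mulVec, dotProduct, Fintype.sum_prod_type, LNmat]

theorem LNmat_mulVec_one (N : ℕ) (m : Fin (N + 1) → Fin (N + 1) → ℝ)
    (v : Fin (N + 1) × Fin 2 → ℂ) (i : Fin (N + 1)) :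
    (LNmat N m).mulVec v (i, 1) = ∑ j, (m i j : ℂ) * v (j, 0) + ((N : ℂ) + 1) * v (i, 1) := by
  simp [Matrix.mulVec, dotProduct, Fintype.sum_prod_type, LNmat]
  have h : ∀ x, (if i = x then (m i x : ℂ) * v (x, 0) + ((N : ℂ) + 1) * v (x, 1)
      else (m i x : ℂ) * v (x, 0))
      = (m i x : ℂ) * v (x, 0) + if i = x then ((N : ℂ) + 1) * v (x, 1) else 0 := fun x => by
    split_ifs <;> simp
  simp [h, Finset.sum_add_distrib]

/-- If `𝓛_N (a, a', c₁, c₁', …, c_N, c_N')ᵀ = (b, b', …, b, b')ᵀ`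
then `a = b = c₁ = ⋯ = c_N` and
`b' − a' = Σⱼ cⱼ' + (1/(N+1))(Σ_{i,j} m_{ij})·a`, i.e. the boundary equations of
`𝓛_N` are exactly the δ-type vertex conditions with `Z = (Σ_{i,j} m_{ij})/(N+1)`. -/
theorem LN_boundary_conditions (N : ℕ) (hN : 1 ≤ N)
    (m : Fin (N + 1) → Fin (N + 1) → ℝ) (hm : ∀ i j, m i j = m j i)
    (a a' b b' : ℂ) (c c' : Fin N → ℂ)
    (hrel : (LNmat N m).mulVec (bvec a a' c c')
      = fun p : Fin (N + 1) × Fin 2 => if p.2 = 0 then b else b') :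
    a = b ∧ (∀ k : Fin N, c k = b) ∧
    b' - a' = (∑ k : Fin N, c' k)
      + ((∑ i : Fin (N + 1), ∑ j : Fin (N + 1), (m i j : ℂ)) / ((N : ℂ) + 1)) * a := by
  have h0 : ∀ i, bvec a a' c c' (i, 0) = b := fun i => by
    rw [← LNmat_mulVec_zero N m (bvec a a' c c') i, hrel]; simp
  have h1 : ∀ i, (∑ j, (m i j : ℂ)) * b + ((N : ℂ) + 1) * bvec a a' c c' (i, 1) = b' := fun i => by
    have h := LNmat_mulVec_one N m (bvec a a' c c') i
    rw [hrel] at h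
    simp only [h0, ← Finset.sum_mul] at h
    simpa using h.symm
  have ha : a = b := by simpa [bvec] using h0 0
  refine ⟨ha, fun k => by simpa [bvec] using h0 k.succ, ?_⟩
  have hs : ∑ i, bvec a a' c c' (i, 1) = a' + ∑ k, c' k := by
    rw [Fin.sum_univ_succ]; simp [bvec]
  have hsum := Finset.sum_congr (rfl : (Finset.univ : Finset (Fin (N + 1))) = _) fun i _ => h1 i
  rw [Finset.sum_add_distrib, ← Finset.sum_mul, ← Finset.mul_sum, hs] at hsum
  simp only [Finset.sum_const, Finset.card_univ, Fintype.card_fin, nsmul_eq_mul] at hsum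
  push_cast at hsum
  have hN1 : (N : ℂ) + 1 ≠ 0 := Nat.cast_add_one_ne_zero N
  rw [ha]
  field_simp
  linear_combination -hsum
end

section
/- Let L > 0, ω ∈ ℝ, and let Φ : ℝ → ℝ be twice continuously differentiable, 2L-periodic, and strictly positive, satisfying −Φ''(x) + ω·Φ(x) − Φ(x)³ = 0 for all x ∈ ℝ. If f : ℝ → ℝ is twice continuously differentiable, 2L-periodic, and satisfies the linearized equation −f''(x) + ω·f(x) − Φ(x)²·f(x) = 0 for all x ∈ ℝ, then there exists c ∈ ℝ such that f = c·Φ. -/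
/-!
The Wronskian `W = f' Φ - f Φ'` is constant because `f` and `Φ` solve the same Hill equation, and
the quotient `f / Φ` has derivative `W / Φ²`. The quotient is periodic, so by Rolle's theorem its
derivative vanishes somewhere; hence `W = 0`, and `f / Φ` is constant.
-/

/-- (Floquet-theory fact.) Let `Φ : ℝ → ℝ` be a twice continuously
differentiable, `2L`-periodic, strictly positive solution of the stationary cubic NLS
equation `−Φ'' + ωΦ − Φ³ = 0`. Then every twice continuously differentiable,
`2L`-periodic solution `f` of the linearized equation `−f'' + ωf − Φ²f = 0` is a
constant multiple of `Φ`. -/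
theorem periodic_kernel_is_span_of_positive_solution
    (L : ℝ) (hL : 0 < L) (ω : ℝ) (Φ Φd Φdd f fd fdd : ℝ → ℝ)
    (hΦ : ∀ x, HasDerivAt Φ (Φd x) x)
    (hΦd : ∀ x, HasDerivAt Φd (Φdd x) x)
    (hΦdd : Continuous Φdd)
    (hΦper : ∀ x, Φ (x + 2 * L) = Φ x)
    (hΦpos : ∀ x, 0 < Φ x)
    (hΦode : ∀ x, -Φdd x + ω * Φ x - (Φ x) ^ 3 = 0)
    (hf : ∀ x, HasDerivAt f (fd x) x)
    (hfd : ∀ x, HasDerivAt fd (fdd x) x)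
    (hfdd : Continuous fdd)
    (hfper : ∀ x, f (x + 2 * L) = f x)
    (hfode : ∀ x, -fdd x + ω * f x - (Φ x) ^ 2 * f x = 0) :
    ∃ c : ℝ, ∀ x, f x = c * Φ x := by
  have hW : ∀ x, HasDerivAt (fun x => fd x * Φ x - f x * Φd x) 0 x := by
    intro x
    refine (((hfd x).mul (hΦ x)).sub ((hf x).mul (hΦd x))).congr_deriv ?_
    linear_combination (-Φ x) * hfode x + f x * hΦode x
  have hWconst : ∀ x y, fd x * Φ x - f x * Φd x = fd y * Φ y - f y * Φd y :=
    is_const_of_deriv_eq_zero (fun x => (hW x).differentiableAt) (fun x => (hW x).deriv)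
  have hq : ∀ x, HasDerivAt (fun x => f x / Φ x) ((fd x * Φ x - f x * Φd x) / Φ x ^ 2) x :=
    fun x => (hf x).div (hΦ x) (hΦpos x).ne'
  obtain ⟨ξ, -, hξ⟩ : ∃ ξ ∈ Set.Ioo 0 (0 + 2 * L),
      (fd ξ * Φ ξ - f ξ * Φd ξ) / Φ ξ ^ 2 = 0 := by
    refine exists_hasDerivAt_eq_zero (f := fun x => f x / Φ x) (by linarith)
      (fun x _ => (hq x).continuousAt.continuousWithinAt) ?_ (fun x _ => hq x)
    simp only [hfper, hΦper]
  have hWξ : fd ξ * Φ ξ - f ξ * Φd ξ = 0 :=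
    (div_eq_zero_iff.mp hξ).resolve_right (pow_ne_zero 2 (hΦpos ξ).ne')
  have hqconst : ∀ x y, f x / Φ x = f y / Φ y :=
    is_const_of_deriv_eq_zero (fun x => (hq x).differentiableAt) fun x => by
      rw [(hq x).deriv, hWconst x ξ, hWξ, zero_div]
  exact ⟨f 0 / Φ 0, fun x => (div_eq_iff (hΦpos x).ne').mp (hqconst x 0)⟩
end

section
/- Let L > 0, let N be a positive integer, let Z < 0, and let ω > N²/Z². Define Ψ(x) = √(2ω)·sech(√ω·(x−L) + arctanh(−N/(Z·√ω))) for x ≥ L, where sech t = 1/cosh t. Then Ψ is twice continuously differentiable on [L,∞), strictly positive, square-integrable on (L,∞), satisfies −Ψ''(x) + ω·Ψ(x) − Ψ(x)³ = 0 for all x ≥ L, and satisfies the vertex condition N·Ψ(L) = Z·Ψ'(L). -/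
/-!
With `s = √ω`, `a = arctanh (-N/(Z s))` and `u = s (x - L) + a`, the profile is
`Ψ = √(2ω) sech u`. Differentiating gives `Ψ' = -√(2ω) s sinh u / cosh² u` and
`Ψ'' = √(2ω) ω (cosh² u - 2) / cosh³ u` (`hasDerivAt_sech`, `hasDerivAt_sech_deriv`), so the
equation follows from `√(2ω)² = 2ω`. Square-integrability comes from `cosh u ≥ exp u / 2`, which
dominates `Ψ²` by a decaying exponential. Finally `Ψ'(L) = -s tanh a · Ψ(L)`, and
`tanh a = -N/(Z s)` because `-N/(Z s) ∈ (0,1)` (`sinh_arctanh_eq`); this is the vertex condition.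
-/

open Set MeasureTheory

/-- The inverse hyperbolic tangent, `arctanh y = (1/2)·log((1+y)/(1−y))`. -/
noncomputable def arctanh (y : ℝ) : ℝ := (1 / 2) * Real.log ((1 + y) / (1 - y))

/-- The tail-soliton profile
`Ψ(x) = √(2ω)·sech(√ω·(x−L) + arctanh(−N/(Z·√ω)))`, where `sech t = 1/cosh t`. -/
noncomputable def tailProfile (L ω Z : ℝ) (N : ℕ) : ℝ → ℝ := fun x =>
  Real.sqrt (2 * ω) *
    (1 / Real.cosh (Real.sqrt ω * (x - L) + arctanh (-(N : ℝ) / (Z * Real.sqrt ω))))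

/-- The identity `tanh (arctanh y) = y`, cleared of denominators. -/
lemma sinh_arctanh_eq {y : ℝ} (h₁ : -1 < y) (h₂ : y < 1) :
    Real.sinh (arctanh y) = y * Real.cosh (arctanh y) := by
  have h : arctanh y = Real.artanh y :=
    (Real.artanh_eq_half_log ⟨h₁.le, h₂.le⟩).symm
  have ht : Real.tanh (arctanh y) = y := by rw [h, Real.tanh_artanh ⟨h₁, h₂⟩]
  rw [Real.tanh_eq_sinh_div_cosh, div_eq_iff (Real.cosh_pos _).ne'] at ht
  exact ht

lemma hasDerivAt_sech (A s L a x : ℝ) :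
    HasDerivAt (fun x => A * (1 / Real.cosh (s * (x - L) + a)))
      (-(A * s) * (Real.sinh (s * (x - L) + a) / Real.cosh (s * (x - L) + a) ^ 2)) x := by
  have hu : HasDerivAt (fun x : ℝ => s * (x - L) + a) s x := by
    simpa using (((hasDerivAt_id x).sub_const L).const_mul s).add_const a
  have h := ((hasDerivAt_const x (1 : ℝ)).div hu.cosh (Real.cosh_pos _).ne').const_mul A
  refine h.congr_deriv ?_
  ring

lemma hasDerivAt_sech_deriv (A s L a x : ℝ) :
    HasDerivAt
      (fun x => -(A * s) * (Real.sinh (s * (x - L) + a) / Real.cosh (s * (x - L) + a) ^ 2))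
      (A * s ^ 2 * ((Real.cosh (s * (x - L) + a) ^ 2 - 2) / Real.cosh (s * (x - L) + a) ^ 3))
      x := by
  have hu : HasDerivAt (fun x : ℝ => s * (x - L) + a) s x := by
    simpa using (((hasDerivAt_id x).sub_const L).const_mul s).add_const a
  have hc := (Real.cosh_pos (s * (x - L) + a)).ne'
  have h := (hu.sinh.div (hu.cosh.pow 2) (pow_ne_zero 2 hc)).const_mul (-(A * s))
  refine h.congr_deriv ?_
  have hsq := Real.sinh_sq (s * (x - L) + a)
  simp only [Pi.pow_apply]
  field_simp
  push_cast
  simp only [pow_one]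
  linear_combination (2 * A * s ^ 2 * Real.cosh (s * (x - L) + a)) * hsq

lemma integrableOn_sech_sq (A s L a : ℝ) (hs : 0 < s) :
    IntegrableOn (fun x => (A * (1 / Real.cosh (s * (x - L) + a))) ^ 2) (Ioi L) := by
  have hdom : IntegrableOn
      (fun x => A ^ 2 * 4 * Real.exp (2 * (s * L - a)) * Real.exp (-(2 * s) * x)) (Ioi L) :=
    (integrableOn_exp_mul_Ioi (by linarith) L).const_mul _
  refine Integrable.mono' hdom ?_ (ae_of_all _ fun x => ?_)
  · have : Continuous (fun x => (A * (1 / Real.cosh (s * (x - L) + a))) ^ 2) := by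
      have hc : Continuous (fun x : ℝ => Real.cosh (s * (x - L) + a)) := by fun_prop
      exact (continuous_const.mul (continuous_const.div hc fun x => (Real.cosh_pos _).ne')).pow 2
    exact this.aestronglyMeasurable
  · set u := s * (x - L) + a with hu
    have hexp : 4 * Real.exp (2 * (s * L - a)) * Real.exp (-(2 * s) * x)
        = (1 / (Real.exp u / 2)) ^ 2 := by
      have h2 : Real.exp (2 * (s * L - a)) * Real.exp (-(2 * s) * x) = (Real.exp (-u)) ^ 2 := by
        rw [← Real.exp_add, ← Real.exp_nat_mul]
        congr 1
        rw [hu]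
        push_cast
        ring
      rw [mul_assoc, h2, Real.exp_neg]
      field_simp
      norm_num
    have hle : Real.exp u / 2 ≤ Real.cosh u := by
      rw [Real.cosh_eq]
      linarith [Real.exp_pos (-u)]
    have hpos : 0 < Real.exp u / 2 := by positivity
    rw [Real.norm_of_nonneg (sq_nonneg _), mul_pow, mul_assoc (A ^ 2), mul_assoc (A ^ 2), hexp]
    have hc := Real.cosh_pos u
    gcongr

/-- For `L > 0`, `N ≥ 1`, `Z < 0` and `ω > N²/Z²`, the profile
`Ψ = tailProfile L ω Z N` is twice continuously differentiable on `[L,∞)`, strictly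
positive, square-integrable on `(L,∞)`, solves `−Ψ'' + ωΨ − Ψ³ = 0` on `[L,∞)`, and
satisfies the vertex condition `N·Ψ(L) = Z·Ψ'(L)`. -/
theorem tailProfile_properties (L : ℝ) (hL : 0 < L) (N : ℕ) (hN : 1 ≤ N)
    (Z : ℝ) (hZ : Z < 0) (ω : ℝ) (hω : (N : ℝ) ^ 2 / Z ^ 2 < ω) :
    ContDiffOn ℝ 2 (tailProfile L ω Z N) (Ici L) ∧
    (∀ x ∈ Ici L, 0 < tailProfile L ω Z N x) ∧
    IntegrableOn (fun x => (tailProfile L ω Z N x) ^ 2) (Ioi L) ∧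
    (∀ x ∈ Ici L,
      -(deriv (deriv (tailProfile L ω Z N)) x) + ω * tailProfile L ω Z N x
        - (tailProfile L ω Z N x) ^ 3 = 0) ∧
    (N : ℝ) * tailProfile L ω Z N L = Z * deriv (tailProfile L ω Z N) L := by
  have hN' : (0 : ℝ) < N := by exact_mod_cast hN
  have hω0 : 0 < ω := lt_of_le_of_lt (by positivity) hω
  have hs : 0 < Real.sqrt ω := Real.sqrt_pos.2 hω0
  have hs2 : Real.sqrt ω ^ 2 = ω := Real.sq_sqrt hω0.le
  have hA : 0 < Real.sqrt (2 * ω) := Real.sqrt_pos.2 (by linarith)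
  have hA2 : Real.sqrt (2 * ω) ^ 2 = 2 * ω := Real.sq_sqrt (by linarith)
  -- `N < -Z √ω`, which places the argument of `arctanh` in `(0, 1)`
  have hlt : (N : ℝ) < -Z * Real.sqrt ω := by
    rw [div_lt_iff₀ (sq_pos_of_neg hZ)] at hω
    refine lt_of_pow_lt_pow_left₀ 2 (mul_nonneg (by linarith) hs.le) ?_
    rw [mul_pow, hs2]
    linarith
  have hy : -(N : ℝ) / (Z * Real.sqrt ω) = N / (-Z * Real.sqrt ω) := by
    rw [neg_mul, div_neg, neg_div]
  have hZs : 0 < -Z * Real.sqrt ω := mul_pos (by linarith) hs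
  have hy0 : 0 < -(N : ℝ) / (Z * Real.sqrt ω) := by rw [hy]; positivity
  have hy1 : -(N : ℝ) / (Z * Real.sqrt ω) < 1 := by rw [hy, div_lt_one hZs]; exact hlt
  have hsinh := sinh_arctanh_eq (by linarith) hy1
  have hd : deriv (tailProfile L ω Z N) = _ :=
    funext fun x => (hasDerivAt_sech (Real.sqrt (2 * ω)) (Real.sqrt ω) L
      (arctanh (-(N : ℝ) / (Z * Real.sqrt ω))) x).deriv
  refine ⟨?_, ?_, integrableOn_sech_sq _ _ _ _ hs, ?_, ?_⟩
  · have hc : ContDiff ℝ 2 (fun x : ℝ => Real.cosh (Real.sqrt ω * (x - L) +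
        arctanh (-(N : ℝ) / (Z * Real.sqrt ω)))) := by fun_prop
    exact (contDiff_const.mul
      (contDiff_const.div hc fun x => (Real.cosh_pos _).ne')).contDiffOn
  · intro x _
    exact mul_pos hA (one_div_pos.2 (Real.cosh_pos _))
  · intro x _
    rw [hd, (hasDerivAt_sech_deriv _ _ _ _ x).deriv, tailProfile]
    have hc := (Real.cosh_pos (Real.sqrt ω * (x - L) +
      arctanh (-(N : ℝ) / (Z * Real.sqrt ω)))).ne'
    generalize Real.cosh (Real.sqrt ω * (x - L) +
      arctanh (-(N : ℝ) / (Z * Real.sqrt ω))) = c at hc ⊢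
    rw [hs2]
    field_simp
    linear_combination -Real.sqrt (2 * ω) * hA2
  · rw [hd]
    simp only [tailProfile, sub_self, mul_zero, zero_add]
    rw [hsinh]
    have hc := (Real.cosh_pos (arctanh (-(N : ℝ) / (Z * Real.sqrt ω)))).ne'
    generalize Real.cosh (arctanh (-(N : ℝ) / (Z * Real.sqrt ω))) = c at hc ⊢
    have hZ' := hZ.ne
    field_simp
end

section
/- Let L > 0, let N be a positive integer, let Z < 0, and let ω > N²/Z². Define Ψ(x) = √(2ω)·sech(√ω·(x−L) + arctanh(−N/(Z·√ω))) for x ≥ L, where sech t = 1/cosh t. Then Ψ''(L) = 0 if and only if ω = 2N²/Z². -/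
/-!
With `u = √ω (x - L) + a` and `a = arctanh (-N / (Z √ω))`, two differentiations give
`Ψ'' = -√(2ω) ω (cosh² u - 2 sinh² u) / cosh³ u`. Hence `Ψ''(L) = 0` exactly when
`2 tanh² a = 1`. The condition `ω > N² / Z²` puts `-N / (Z √ω)` inside `(-1, 1)`, so that
`tanh² a = N² / (Z² ω)`, and the equation becomes `ω = 2 N² / Z²`.
-/

open Set MeasureTheory

/-- The second derivative of a rescaled and shifted `sech`. -/
lemma deriv_deriv_sech (c k L a : ℝ) :
    deriv (deriv fun x => c * (1 / Real.cosh (k * (x - L) + a))) L =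
      -(c * k ^ 2 * (Real.cosh a ^ 2 - 2 * Real.sinh a ^ 2) / Real.cosh a ^ 3) := by
  have hu (x : ℝ) : HasDerivAt (fun x => k * (x - L) + a) k x := by
    simpa using (((hasDerivAt_id x).sub_const L).const_mul k).add_const a
  have hc (x : ℝ) : Real.cosh (k * (x - L) + a) ≠ 0 := (Real.cosh_pos _).ne'
  have h1 : deriv (fun x => c * (1 / Real.cosh (k * (x - L) + a))) =
      fun x => c * (-(Real.sinh (k * (x - L) + a) * k) / Real.cosh (k * (x - L) + a) ^ 2) := by
    funext x
    simpa only [one_div] using (((hu x).cosh.fun_inv (hc x)).const_mul c).deriv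
  rw [h1]
  have h2 := ((((hu L).sinh.mul_const k).fun_neg.fun_div ((hu L).cosh.fun_pow 2)
    (pow_ne_zero 2 (hc L))).const_mul c).deriv
  rw [h2]
  have ha : Real.cosh a ≠ 0 := (Real.cosh_pos a).ne'
  simp only [sub_self, mul_zero, zero_add]
  field_simp
  ring

lemma tanh_arctanh {y : ℝ} (hy : y ∈ Ioo (-1 : ℝ) 1) : Real.tanh (arctanh y) = y := by
  have h : arctanh y = Real.artanh y :=
    (Real.artanh_eq_half_log ⟨hy.1.le, hy.2.le⟩).symm
  rw [h, Real.tanh_artanh hy]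

/-- For `L > 0`, `N ≥ 1`, `Z < 0` and `ω > N²/Z²`, the vertex `L` is
an inflection point of the tail-soliton profile (`Ψ''(L) = 0`) if and only if
`ω = 2N²/Z²`. -/
theorem tailProfile_inflection_iff (L : ℝ) (hL : 0 < L) (N : ℕ) (hN : 1 ≤ N)
    (Z : ℝ) (hZ : Z < 0) (ω : ℝ) (hω : (N : ℝ) ^ 2 / Z ^ 2 < ω) :
    deriv (deriv (tailProfile L ω Z N)) L = 0 ↔ ω = 2 * (N : ℝ) ^ 2 / Z ^ 2 := by
  have hZ2 : 0 < Z ^ 2 := sq_pos_iff.2 hZ.ne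
  have hN0 : (0 : ℝ) < N := by exact_mod_cast hN
  have hω0 : 0 < ω := lt_trans (by positivity) hω
  have hk : Real.sqrt ω ^ 2 = ω := Real.sq_sqrt hω0.le
  set y : ℝ := -(N : ℝ) / (Z * Real.sqrt ω) with hy
  have hysq : y ^ 2 = (N : ℝ) ^ 2 / (Z ^ 2 * ω) := by
    rw [hy, div_pow, mul_pow, hk, neg_sq]
  have hy1 : y ∈ Ioo (-1 : ℝ) 1 := by
    rw [mem_Ioo, ← abs_lt, ← sq_lt_one_iff_abs_lt_one, hysq, div_lt_one (by positivity)]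
    rwa [div_lt_iff₀ hZ2, mul_comm] at hω
  have ht : Real.sinh (arctanh y) = y * Real.cosh (arctanh y) := by
    have h := tanh_arctanh hy1
    rwa [Real.tanh_eq_sinh_div_cosh, div_eq_iff (Real.cosh_pos _).ne'] at h
  have hc := Real.cosh_pos (arctanh y)
  have hs : 0 < Real.sqrt (2 * ω) := Real.sqrt_pos.2 (by positivity)
  unfold tailProfile
  rw [deriv_deriv_sech, ← hy, ht, hk]
  have key : -(Real.sqrt (2 * ω) * ω * (Real.cosh (arctanh y) ^ 2 -
      2 * (y * Real.cosh (arctanh y)) ^ 2) / Real.cosh (arctanh y) ^ 3) =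
      -(Real.sqrt (2 * ω) * ω / Real.cosh (arctanh y)) * (1 - 2 * y ^ 2) := by
    field_simp
  have hne : -(Real.sqrt (2 * ω) * ω / Real.cosh (arctanh y)) ≠ 0 :=
    neg_ne_zero.2 (by positivity)
  rw [key, mul_eq_zero, or_iff_right hne, hysq, eq_div_iff hZ2.ne', sub_eq_zero,
    ← mul_div_assoc, eq_div_iff (by positivity), one_mul, mul_comm]
end
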